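/- Let G be a finite group, H ⊴ G of prime index p, V a G-stable irreducible FH-module with α, λ as usual, and suppose α|Z(Δ) has order p. If the equation μ^{⊏p} = λ⁻¹ has no solution μ ∈ Δ^×, then the induced module V↑G is an irreducible FG-module. -/

import Mathlib

open LinearMap

/-- Left-twisted powers of an endomorphism `μ` with respect to conjugation by `α`:
`μ^{⊏0} = 1`, `μ^{⊏(i+1)} = μ^{⊏i} ⬝ (α^i-conjugate of μ)`. -/
def ltpE {F V : Type*} [Field F] [AddCommGroup V] [Module F V]
    (α : V ≃ₗ[F] V) (μ : Module.End F V) : ℕ → Module.End F V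
  | 0 => 1
  | i + 1 => ltpE α μ i *
      (((α.symm : V →ₗ[F] V) ^ i) ∘ₗ μ ∘ₗ ((α : V →ₗ[F] V) ^ i))

theorem aux_equiv {F V W : Type*} [Field F] [AddCommGroup V] [Module F V] [AddCommGroup W]
    [Module F W] {n : ℕ} (f : Fin n → V →ₗ[F] W) (hf : ∀ i, Function.Injective (f i))
    (h : DirectSum.IsInternal fun i => LinearMap.range (f i)) :
    ∃ Φ : (Fin n → V) ≃ₗ[F] W, ∀ v, Φ v = ∑ i, f i (v i) := by
  let u : (i : Fin n) → V ≃ₗ[F] LinearMap.range (f i) := fun i => LinearEquiv.ofInjective (f i) (hf i)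
  let Φ : (Fin n → V) →ₗ[F] W := ∑ i, f i ∘ₗ LinearMap.proj i
  have hΦ : ∀ v, Φ v = ∑ i, f i (v i) := fun v => by simp [Φ]
  refine ⟨LinearEquiv.ofBijective Φ ⟨?_, ?_⟩, fun v => hΦ v⟩
  · have hi := h.submodule_iSupIndep.dfinsupp_lsum_injective
    rw [← LinearMap.ker_eq_bot, LinearMap.ker_eq_bot']
    intro v hv
    rw [hΦ] at hv
    have h3 : (∑ i, DFinsupp.single i (u i (v i)) : Π₀ i, LinearMap.range (f i)) = 0 := by
      apply hi
      rw [map_zero, ← hv, map_sum]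
      refine Finset.sum_congr rfl fun i _ => ?_
      rw [DFinsupp.lsum_single]
      rfl
    funext i
    have h2 := DFunLike.congr_fun h3 i
    rw [DFinsupp.finsetSum_apply, Finset.sum_eq_single i] at h2
    · rw [DFinsupp.single_eq_same] at h2
      exact (u i).map_eq_zero_iff.1 h2
    · intro j _ hj
      exact DFinsupp.single_eq_of_ne hj.symm
    · simp
  · rw [← LinearMap.range_eq_top, eq_top_iff, ← h.submodule_iSup_eq_top, iSup_le_iff]
    rintro i _ ⟨v, rfl⟩
    refine ⟨Pi.single i v, ?_⟩
    rw [hΦ, Finset.sum_eq_single i]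
    · simp
    · intro j _ hj
      simp [hj]
    · simp

theorem aux_min {F W K : Type*} [Field F] [AddCommGroup W] [Module F W] [FiniteDimensional F W]
    (π : K → Module.End F W) (U : Submodule F W) (hU : ∀ k, ∀ w ∈ U, π k w ∈ U) (h0 : U ≠ ⊥) :
    ∃ S : Submodule F W, S ≤ U ∧ S ≠ ⊥ ∧ (∀ k, ∀ w ∈ S, π k w ∈ S) ∧
      ∀ S' : Submodule F W, S' ≤ S → (∀ k, ∀ w ∈ S', π k w ∈ S') → S' = ⊥ ∨ S' = S := by
  obtain ⟨S, ⟨h1, h2, h3⟩, hm⟩ := WellFounded.has_min (wellFounded_lt (α := Submodule F W))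
    {S | S ≤ U ∧ S ≠ ⊥ ∧ ∀ k, ∀ w ∈ S, π k w ∈ S} ⟨U, le_rfl, h0, hU⟩
  refine ⟨S, h1, h2, h3, fun S' hle hinv => ?_⟩
  by_contra! hc
  exact hm S' ⟨hle.trans h1, hc.1, hinv⟩ (lt_of_le_of_ne hle hc.2)

theorem aux_dim {F V W K : Type*} [Field F] [AddCommGroup V] [Module F V] [AddCommGroup W]
    [Module F W] [FiniteDimensional F W] [FiniteDimensional F V]
    (ρ : K → Module.End F V) (π : K → Module.End F W)
    (hirr : ∀ U : Submodule F V, (∀ h, ∀ v ∈ U, ρ h v ∈ U) → U = ⊥ ∨ U = ⊤)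
    (s : Finset (V →ₗ[F] W)) : ∀ (_ : ∀ f ∈ s, ∀ k v, f (ρ k v) = π k (f v))
    (Y : Submodule F W) (_ : ∀ k, ∀ w ∈ Y, π k w ∈ Y),
    ∃ n, Module.finrank F ↥(Y ⊔ s.sup LinearMap.range) = Module.finrank F Y + n * Module.finrank F V := by
  classical
  induction s using Finset.induction_on with
  | empty => intro _ Y _; exact ⟨0, by rw [Finset.sup_empty, sup_bot_eq, zero_mul, add_zero]⟩
  | insert f s hfs ih =>
    intro hs Y hY
    have hf := hs f (Finset.mem_insert_self _ _)
    rw [Finset.sup_insert, ← sup_assoc]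
    have hinv : ∀ k, ∀ w ∈ Y ⊔ LinearMap.range f, π k w ∈ Y ⊔ LinearMap.range f := by
      intro k w hw
      obtain ⟨y, hy, _, ⟨v, rfl⟩, rfl⟩ := Submodule.mem_sup.1 hw
      rw [map_add, ← hf]
      exact Submodule.add_mem_sup (hY k y hy) ⟨_, rfl⟩
    obtain ⟨n, hn⟩ := ih (fun g hg => hs g (Finset.mem_insert_of_mem hg)) _ hinv
    rw [hn]
    rcases hirr (Y.comap f) (fun k v hv => by
      rw [Submodule.mem_comap, hf]; exact hY k _ hv) with h | h
    · have hinj : Function.Injective f := by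
        rw [← LinearMap.ker_eq_bot, eq_bot_iff, ← h]
        intro v hv
        rw [Submodule.mem_comap, LinearMap.mem_ker.1 hv]; exact Y.zero_mem
      have h1 := Submodule.finrank_sup_add_finrank_inf_eq Y (LinearMap.range f)
      have h2 : Y ⊓ LinearMap.range f = ⊥ := by
        rw [eq_bot_iff]
        rintro _ ⟨hy, v, rfl⟩
        have : v ∈ Y.comap f := hy
        rw [h, Submodule.mem_bot] at this
        simp [this]
      rw [h2, finrank_bot, LinearMap.finrank_range_of_inj hinj] at h1
      exact ⟨n + 1, by rw [add_zero] at h1; rw [h1]; ring⟩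
    · have : LinearMap.range f ≤ Y := by
        rintro _ ⟨v, rfl⟩
        have : v ∈ Y.comap f := by rw [h]; trivial
        exact this
      exact ⟨n, by rw [sup_eq_left.2 this]⟩

theorem aux_schur {F V W K : Type*} [Field F] [AddCommGroup V] [Module F V] [AddCommGroup W]
    [Module F W] (ρ : K → Module.End F V) (π : K → Module.End F W)
    (hirr : ∀ U : Submodule F V, (∀ h, ∀ v ∈ U, ρ h v ∈ U) → U = ⊥ ∨ U = ⊤)
    (hirr' : ∀ U : Submodule F W, (∀ h, ∀ v ∈ U, π h v ∈ U) → U = ⊥ ∨ U = ⊤)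
    (f : V →ₗ[F] W) (hf : ∀ k v, f (ρ k v) = π k (f v)) (h0 : f ≠ 0) : Function.Bijective f := by
  constructor
  · rw [← LinearMap.ker_eq_bot]
    refine (hirr _ fun k v hv => ?_).resolve_right fun h => h0 (LinearMap.ker_eq_top.1 h)
    rw [LinearMap.mem_ker] at hv ⊢
    rw [hf, hv, map_zero]
  · rw [← LinearMap.range_eq_top]
    refine (hirr' _ ?_).resolve_left fun h => h0 (LinearMap.range_eq_bot.1 h)
    rintro k _ ⟨v, rfl⟩
    exact ⟨_, hf k v⟩

/-- an invariant subspace detected by equivariant maps to `V` contains a copy of `V` -/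
theorem aux_copy {F V W K ι : Type*} [Field F] [AddCommGroup V] [Module F V] [AddCommGroup W]
    [Module F W] [FiniteDimensional F W] (ρ : K → Module.End F V) (π : K → Module.End F W)
    (hirr : ∀ U : Submodule F V, (∀ h, ∀ v ∈ U, ρ h v ∈ U) → U = ⊥ ∨ U = ⊤)
    (d : ι → W →ₗ[F] V) (hd : ∀ i k w, d i (π k w) = ρ k (d i w))
    (hd0 : ∀ w, (∀ i, d i w = 0) → w = 0)
    (U : Submodule F W) (hU : ∀ k, ∀ w ∈ U, π k w ∈ U) (h0 : U ≠ ⊥) :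
    ∃ θ : V →ₗ[F] W, Function.Injective θ ∧ (∀ k v, θ (ρ k v) = π k (θ v)) ∧
      ∀ v, θ v ∈ U := by
  obtain ⟨S, hSU, hS0, hS, hSm⟩ := aux_min π U hU h0
  obtain ⟨w, hw, hw0⟩ := Submodule.exists_mem_ne_zero_of_ne_bot hS0
  have : ∃ i, d i w ≠ 0 := by
    by_contra! hc
    exact hw0 (hd0 w hc)
  obtain ⟨i, hi⟩ := this
  have hb := aux_schur (fun k => (π k).restrict (hS k)) ρ (by
    intro X hX
    rcases hSm (X.map S.subtype) (Submodule.map_subtype_le _ _) (by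
      rintro k _ ⟨x, hx, rfl⟩
      exact ⟨_, hX k x hx, rfl⟩) with h | h
    · left
      rw [eq_bot_iff]
      intro x hx
      have : (x : W) ∈ X.map S.subtype := ⟨x, hx, rfl⟩
      rw [h, Submodule.mem_bot] at this
      exact Subtype.ext this
    · right
      rw [eq_top_iff]
      intro x _
      have : (x : W) ∈ X.map S.subtype := by rw [h]; exact x.2
      obtain ⟨y, hy, hyx⟩ := this
      rwa [← Subtype.ext hyx]) hirr (d i ∘ₗ S.subtype) (fun k v => by
        simp [hd]) (fun h => hi (by simpa using LinearMap.congr_fun h ⟨w, hw⟩))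
  let e := LinearEquiv.ofBijective _ hb
  refine ⟨S.subtype ∘ₗ e.symm.toLinearMap, ?_, ?_, ?_⟩
  · exact S.injective_subtype.comp e.symm.injective
  · intro k v
    obtain ⟨x, rfl⟩ := e.surjective v
    have : ρ k (e x) = e ((π k).restrict (hS k) x) := by
      simp [e, hd]
    simp [this]
  · intro v
    exact hSU (e.symm v).2

theorem aux_ltp {F V : Type*} [Field F] [AddCommGroup V] [Module F V]
    (α : V ≃ₗ[F] V) (μ : Module.End F V) (n : ℕ) :
    ltpE α μ n = (μ * (α.symm : Module.End F V)) ^ n * (α : Module.End F V) ^ n := by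
  have h1 : (α : Module.End F V) * (α.symm : Module.End F V) = 1 := by ext; simp
  have hc : Commute (α : Module.End F V) (α.symm : Module.End F V) := by
    show _ = _
    rw [h1]; ext; simp
  have h2 : ∀ n, (α : Module.End F V) ^ n * (α.symm : Module.End F V) ^ n = 1 := fun n => by
    rw [← hc.mul_pow, h1, one_pow]
  have h3 : (α.symm : Module.End F V) * (α : Module.End F V) = 1 := by ext; simp
  induction n with
  | zero => simp [ltpE]
  | succ n ih =>
    have : ltpE α μ (n + 1) = ltpE α μ n *
      ((α.symm : Module.End F V) ^ n * (μ * (α : Module.End F V) ^ n)) := rfl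
    rw [this, ih, mul_assoc, ← mul_assoc (_ ^ n) (_ ^ n) (μ * _), h2, one_mul, pow_succ, pow_succ']
    simp only [mul_assoc]
    rw [← mul_assoc (α.symm : Module.End F V) (α : Module.End F V), h3, one_mul]

theorem aux_coset {G : Type*} [Group G] (H : Subgroup G) (hN : H.Normal) (p : ℕ) (hp : p.Prime)
    (hidx : H.index = p) (a : G) (ha : a ∉ H) (g : G) :
    ∃ (i : Fin p) (h : H), g = a ^ (i : ℕ) * h := by
  have := Fact.mk hp
  have hcard : Nat.card (G ⧸ H) = p := hidx
  have hfin : Finite (G ⧸ H) := Nat.finite_of_card_ne_zero (by rw [hcard]; exact hp.ne_zero)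
  have ha1 : (a : G ⧸ H) ≠ 1 := by rwa [Ne, QuotientGroup.eq_one_iff]
  obtain ⟨n, hn⟩ := mem_powers_of_prime_card hcard ha1 (g' := (g : G ⧸ H))
  have hap : (a : G ⧸ H) ^ p = 1 := by rw [← hcard]; exact pow_card_eq_one'
  have h2 : (a : G ⧸ H) ^ (n % p) = g := by
    rw [← hn]
    exact (pow_eq_pow_mod n hap).symm
  refine ⟨⟨n % p, Nat.mod_lt _ hp.pos⟩, ⟨(a ^ (n % p))⁻¹ * g, ?_⟩, by simp⟩
  rw [← QuotientGroup.eq]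
  simpa using h2

theorem aux_fin {F V K : Type*} [Field F] [AddCommGroup V] [Module F V] [Group K] [Finite K]
    [Nontrivial V] (σ : Representation F K V)
    (hirr : ∀ U : Submodule F V, (∀ h : K, ∀ v ∈ U, σ h v ∈ U) → U = ⊥ ∨ U = ⊤) :
    FiniteDimensional F V := by
  obtain ⟨v, hv⟩ := exists_ne (0 : V)
  rcases hirr (Submodule.span F (Set.range fun h => σ h v)) (by
    intro h w hw
    induction hw using Submodule.span_induction with
    | mem x hx =>
      obtain ⟨k, rfl⟩ := hx
      exact Submodule.subset_span ⟨h * k, by simp⟩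
    | zero => simp
    | add x y _ _ hx hy => rw [map_add]; exact add_mem hx hy
    | smul c x _ hx => rw [map_smul]; exact Submodule.smul_mem _ _ hx) with h | h
  · have : v ∈ Submodule.span F (Set.range fun h => σ h v) := Submodule.subset_span ⟨1, by simp⟩
    rw [h] at this
    exact absurd this hv
  · exact ⟨(Submodule.fg_def).2 ⟨_, Set.finite_range _, h⟩⟩

/-- Stable case with `α|Z(Δ)` of order `p`: if the equation `μ^{⊏p} = λ⁻¹` has no
solution `μ ∈ Δ^×` (where `λ = α^{-p} σ(a^p)`), then the induced module `V↑G`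
(modeled by `W` with `H`-equivariant embedding `ι` and `W = ⊕_{i<p} τ(a)^i ι(V)`) is an
irreducible `FG`-module. -/
theorem stmt12 {F : Type*} [Field F] {G : Type*} [Group G] [Finite G]
    {V W : Type*} [AddCommGroup V] [Module F V] [AddCommGroup W] [Module F W]
    (H : Subgroup G) (hN : H.Normal) (p : ℕ) (hp : p.Prime) (hidx : H.index = p)
    (σ : Representation F H V) (τ : Representation F G W)
    [Nontrivial V]
    (hirr : ∀ U : Submodule F V, (∀ h : H, ∀ v ∈ U, σ h v ∈ U) → U = ⊥ ∨ U = ⊤)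
    (a : G) (ha : a ∉ H) (hap : a ^ p ∈ H)
    (α : V ≃ₗ[F] V)
    (hα : ∀ h : H, σ ⟨a * ↑h * a⁻¹, hN.conj_mem ↑h h.2 a⟩ ∘ₗ (α : V →ₗ[F] V) =
      (α : V →ₗ[F] V) ∘ₗ σ h)
    -- `α` restricted to the center of `Δ = End_{FH}(V)` has order (exactly) `p`:
    (hmin : ∀ k : ℕ, 0 < k → k < p →
      ∃ z : Module.End F V, (∀ h : H, Commute z (σ h)) ∧
        (∀ δ : Module.End F V, (∀ h : H, Commute δ (σ h)) → Commute z δ) ∧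
        (((α.symm : V →ₗ[F] V) ^ k) ∘ₗ z ∘ₗ ((α : V →ₗ[F] V) ^ k)) ≠ z)
    -- the induced-module data:
    (ι : V →ₗ[F] W) (hinj : Function.Injective ι)
    (hequiv : ∀ h : H, τ h ∘ₗ ι = ι ∘ₗ σ h)
    (hint : DirectSum.IsInternal fun i : Fin p =>
      Submodule.map (τ (a ^ (i : ℕ))) (LinearMap.range ι))
    -- `μ^{⊏p} = λ⁻¹` has no solution `μ ∈ Δ^×`:
    (hno : ¬ ∃ μ : Module.End F V, IsUnit μ ∧ (∀ h : H, Commute μ (σ h)) ∧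
      ltpE α μ p * (((α.symm : V →ₗ[F] V) ^ p) ∘ₗ σ ⟨a ^ p, hap⟩) = 1) :
    ∀ U : Submodule F W, (∀ g : G, ∀ w ∈ U, τ g w ∈ U) → U = ⊥ ∨ U = ⊤ := by
  classical
  intro U₀ hU₀
  by_cases hU₀b : U₀ = ⊥
  · exact Or.inl hU₀b
  right
  have hVfin : FiniteDimensional F V := aux_fin σ hirr
  -- coordinates
  obtain ⟨Φ, hΦ⟩ := aux_equiv (fun i : Fin p => τ (a ^ (i : ℕ)) ∘ₗ ι)
    (fun i => by
      have : Function.Injective (τ (a ^ (i : ℕ))) := by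
        apply Function.LeftInverse.injective (g := τ (a ^ (i : ℕ))⁻¹)
        intro w
        rw [← Module.End.mul_apply, ← map_mul, inv_mul_cancel, map_one, Module.End.one_apply]
      exact this.comp hinj)
    (by simpa only [LinearMap.range_comp] using hint)
  simp only [LinearMap.comp_apply] at hΦ
  have hWfin : FiniteDimensional F W := LinearEquiv.finiteDimensional Φ
  have hdimW : Module.finrank F W = p * Module.finrank F V := by
    rw [← Φ.finrank_eq, Module.finrank_pi_fintype]; simp
  have hmul : ∀ g g' w, τ (g * g') w = τ g (τ g' w) := fun g g' w => by
    rw [map_mul, Module.End.mul_apply]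
  have hequiv' : ∀ (h : H) v, τ h (ι v) = ι (σ h v) := fun h v => LinearMap.congr_fun (hequiv h) v
  have hΦs : ∀ i v, Φ (Pi.single i v) = τ (a ^ (i : ℕ)) (ι v) := by
    intro i v
    rw [hΦ, Finset.sum_eq_single i]
    · simp
    · intro j _ hj
      simp [hj]
    · simp
  have hΦsymm : ∀ (i j : Fin p) v, Φ.symm (τ (a ^ (i : ℕ)) (ι v)) j = if j = i then v else 0 := by
    intro i j v
    rw [← hΦs, Φ.symm_apply_apply]
    by_cases h : j = i
    · subst h; simp
    · simp [h]
  have hspan : ∀ (X : Submodule F W), (∀ (i : Fin p) v, τ (a ^ (i : ℕ)) (ι v) ∈ X) → X = ⊤ := by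
    intro X hX
    rw [eq_top_iff]
    intro w _
    rw [← Φ.apply_symm_apply w, hΦ]
    exact Submodule.sum_mem _ fun i _ => hX i _
  have hext : ∀ (f g : W →ₗ[F] W),
      (∀ (i : Fin p) v, f (τ (a ^ (i : ℕ)) (ι v)) = g (τ (a ^ (i : ℕ)) (ι v))) → f = g := by
    intro f g hfg
    exact LinearMap.eqLocus_eq_top.1 (hspan (LinearMap.eqLocus f g) hfg)
  have hextV : ∀ (f g : W →ₗ[F] V),
      (∀ (i : Fin p) v, f (τ (a ^ (i : ℕ)) (ι v)) = g (τ (a ^ (i : ℕ)) (ι v))) → f = g := by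
    intro f g hfg
    exact LinearMap.eqLocus_eq_top.1 (hspan (LinearMap.eqLocus f g) hfg)
  -- the automorphism
  set A : Module.End F V := (α : V →ₗ[F] V) with hA
  set B : Module.End F V := (α.symm : V →ₗ[F] V) with hB
  have hAB : A * B = 1 := by ext; simp [hA, hB]
  have hBA : B * A = 1 := by ext; simp [hA, hB]
  have hABn : ∀ n, A ^ n * B ^ n = 1 := fun n => by
    rw [← Commute.mul_pow (hAB.trans hBA.symm), hAB, one_pow]
  have hBAn : ∀ n, B ^ n * A ^ n = 1 := fun n => by
    rw [← Commute.mul_pow (hBA.trans hAB.symm), hBA, one_pow]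
  have hAn : ∀ (n : ℕ) (h h' : H), (h' : G) = a ^ n * h * (a ^ n)⁻¹ → σ h' * A ^ n = A ^ n * σ h := by
    intro n
    induction n with
    | zero =>
      intro h h' hh
      have : h' = h := Subtype.ext (by simpa using hh)
      simp [this]
    | succ n ih =>
      intro h h' hh
      let k : H := ⟨a ^ n * h * (a ^ n)⁻¹, hN.conj_mem h h.2 _⟩
      have h1 := ih h k rfl
      have h2 : σ h' * A = A * σ k := by
        have h3 : h' = ⟨a * ↑k * a⁻¹, hN.conj_mem ↑k k.2 a⟩ := Subtype.ext (by
          rw [hh]; simp only [k, pow_succ']; group)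
        rw [h3]
        exact hα k
      rw [pow_succ', ← mul_assoc, h2, mul_assoc, h1, mul_assoc]
  -- universal property
  have huniv : ∀ f : V →ₗ[F] W, (∀ (h : H) v, f (σ h v) = τ h (f v)) →
      ∃ ψ : Module.End F W, (∀ g w, ψ (τ g w) = τ g (ψ w)) ∧ ∀ v, ψ (ι v) = f v := by
    intro f hf
    let ψ : Module.End F W :=
      (∑ i : Fin p, (τ (a ^ (i : ℕ)) ∘ₗ f) ∘ₗ LinearMap.proj i) ∘ₗ Φ.symm.toLinearMap
    have hψi : ∀ (i : Fin p) v, ψ (τ (a ^ (i : ℕ)) (ι v)) = τ (a ^ (i : ℕ)) (f v) := by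
      intro i v
      simp only [ψ, LinearMap.comp_apply, LinearMap.sum_apply, LinearMap.proj_apply,
        LinearEquiv.coe_coe, hΦsymm]
      rw [Finset.sum_eq_single i]
      · simp
      · intro j _ hj; simp [hj]
      · simp
    have hψg : ∀ g v, ψ (τ g (ι v)) = τ g (f v) := by
      intro g v
      obtain ⟨i, h, rfl⟩ := aux_coset H hN p hp hidx a ha g
      rw [hmul, hmul, hequiv', hψi, hf]
    refine ⟨ψ, fun g w => ?_, fun v => by simpa using hψg 1 v⟩
    have := hext (ψ ∘ₗ τ g) (τ g ∘ₗ ψ) (fun i v => by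
      simp only [LinearMap.comp_apply]
      rw [← hmul, hψg, hψg, hmul])
    exact LinearMap.congr_fun this w
  -- equivariant coordinates
  let d : Fin p → W →ₗ[F] V := fun i => (A ^ (i : ℕ)) ∘ₗ LinearMap.proj i ∘ₗ Φ.symm.toLinearMap
  have hds : ∀ (i j : Fin p) v, d j (τ (a ^ (i : ℕ)) (ι v)) =
      if j = i then (A ^ (i : ℕ)) v else 0 := by
    intro i j v
    simp only [d, LinearMap.comp_apply, LinearMap.proj_apply, LinearEquiv.coe_coe, hΦsymm]
    split_ifs with h
    · rw [h]
    · simp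
  have hd : ∀ i (h : H) w, d i (τ h w) = σ h (d i w) := by
    intro j h w
    have := hextV (d j ∘ₗ τ h) (σ h ∘ₗ d j) (fun i v => by
      simp only [LinearMap.comp_apply]
      let k : H := ⟨(a ^ (i : ℕ))⁻¹ * h * a ^ (i : ℕ), by
        simpa using hN.conj_mem h h.2 (a ^ (i : ℕ))⁻¹⟩
      have h1 : (h : G) * a ^ (i : ℕ) = a ^ (i : ℕ) * k := by simp only [k]; group
      rw [← hmul, h1, hmul, hequiv', hds, hds]
      split_ifs with hji
      · have := hAn i k h (by simp only [k]; group)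
        exact (LinearMap.congr_fun this v).symm
      · simp)
    exact LinearMap.congr_fun this w
  have hd0 : ∀ w, (∀ i, d i w = 0) → w = 0 := by
    intro w hw
    rw [← Φ.symm.map_eq_zero_iff]
    funext i
    have h1 : (B ^ (i : ℕ)) (d i w) = Φ.symm w i :=
      LinearMap.congr_fun (hBAn i) (Φ.symm w i)
    rw [← h1, hw i, map_zero]; rfl
  have hcopy := aux_copy (fun h : H => σ h) (fun h : H => τ h) hirr d hd hd0
  -- End-invariant submodules
  have hT : ∀ T : Submodule F W, T ≠ ⊥ → (∀ g, ∀ w ∈ T, τ g w ∈ T) →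
      (∀ ψ : Module.End F W, (∀ g w, ψ (τ g w) = τ g (ψ w)) → ∀ w ∈ T, ψ w ∈ T) → T = ⊤ := by
    intro T hT0 hTG hTE
    let P : ℕ → Prop := fun n => ∃ θ : V →ₗ[F] W, θ ≠ 0 ∧ (∀ (k : H) v, θ (σ k v) = τ k (θ v)) ∧
      (∀ v, θ v ∈ T) ∧ (Finset.univ.filter fun i => d i ∘ₗ θ ≠ 0).card = n
    have hP : ∃ n, P n := by
      obtain ⟨θ, h1, h2, h3⟩ := hcopy T (fun k => hTG k) hT0
      refine ⟨_, θ, ?_, h2, h3, rfl⟩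
      rintro rfl
      obtain ⟨v, hv⟩ := exists_ne (0 : V)
      exact hv (h1 (by simp))
    obtain ⟨θ, hθ0, hθ, hθT, hθn⟩ := Nat.find_spec hP
    have hex : ∃ i, d i ∘ₗ θ ≠ 0 := by
      by_contra! hc
      apply hθ0
      ext v
      exact hd0 _ fun i => LinearMap.congr_fun (hc i) v
    obtain ⟨j, hj⟩ := hex
    have hδ : ∀ i (h : H) v, d i (θ (σ h v)) = σ h (d i (θ v)) := fun i h v => by rw [hθ, hd]
    have huniq : ∀ i, i ≠ j → d i ∘ₗ θ = 0 := by
      intro i hij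
      by_contra hi
      obtain ⟨z, hz1, hz2, hz3⟩ : ∃ z : Module.End F V, (∀ h : H, Commute z (σ h)) ∧
        (∀ δ : Module.End F V, (∀ h : H, Commute δ (σ h)) → Commute z δ) ∧
        A ^ (i : ℕ) * z * B ^ (i : ℕ) ≠ A ^ (j : ℕ) * z * B ^ (j : ℕ) := by
        have key : ∀ m n : ℕ, m < n → n < p → ∃ z : Module.End F V, (∀ h : H, Commute z (σ h)) ∧
            (∀ δ : Module.End F V, (∀ h : H, Commute δ (σ h)) → Commute z δ) ∧
            A ^ m * z * B ^ m ≠ A ^ n * z * B ^ n := by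
          intro m n hmn hn
          obtain ⟨z, h1, h2, h3⟩ := hmin (n - m) (by omega) (by omega)
          refine ⟨z, h1, h2, fun heq => h3 ?_⟩
          obtain ⟨k, rfl⟩ := Nat.exists_eq_add_of_lt hmn
          have hk : m + k + 1 - m = k + 1 := by omega
          rw [hk]
          show B ^ (k + 1) * (z * A ^ (k + 1)) = z
          have e1 : z = A ^ (k + 1) * z * B ^ (k + 1) := by
            calc z = B ^ m * A ^ m * z * (B ^ m * A ^ m) := by rw [hBAn]; simp
              _ = B ^ m * (A ^ m * z * B ^ m) * A ^ m := by simp only [mul_assoc]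
              _ = B ^ m * (A ^ (m + (k + 1)) * z * B ^ ((k + 1) + m)) * A ^ m := by
                rw [heq, add_assoc, add_comm m (k + 1)]
              _ = (B ^ m * A ^ m) * (A ^ (k + 1) * z * B ^ (k + 1)) * (B ^ m * A ^ m) := by
                rw [pow_add A m, pow_add B (k + 1) m]; simp only [mul_assoc]
              _ = _ := by rw [hBAn]; simp
          calc B ^ (k + 1) * (z * A ^ (k + 1))
              = B ^ (k + 1) * ((A ^ (k + 1) * z * B ^ (k + 1)) * A ^ (k + 1)) := by rw [← e1]
            _ = (B ^ (k + 1) * A ^ (k + 1)) * z * (B ^ (k + 1) * A ^ (k + 1)) := by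
              simp only [mul_assoc]
            _ = z := by rw [hBAn]; simp
        rcases lt_or_gt_of_ne (fun h => hij (Fin.ext h) : (i : ℕ) ≠ j) with h | h
        · exact key _ _ h j.2
        · obtain ⟨z, h1, h2, h3⟩ := key _ _ h i.2
          exact ⟨z, h1, h2, h3.symm⟩
      -- conjugates of intertwiners
      have hconj : ∀ (n : ℕ) (δ : Module.End F V), (∀ h : H, Commute δ (σ h)) →
          ∀ h : H, Commute (A ^ n * δ * B ^ n) (σ h) := by
        intro n δ hδ h
        let k : H := ⟨(a ^ n)⁻¹ * h * a ^ n, by simpa using hN.conj_mem h h.2 (a ^ n)⁻¹⟩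
        have h1 := hAn n k h (by simp only [k]; group)
        have h2 : B ^ n * σ h = σ k * B ^ n := by
          calc B ^ n * σ h = B ^ n * (σ h * A ^ n) * B ^ n := by
                simp only [mul_assoc]; rw [hABn, mul_one]
            _ = (B ^ n * A ^ n) * σ k * B ^ n := by rw [h1]; simp only [mul_assoc]
            _ = _ := by rw [hBAn, one_mul]
        show _ * _ = _ * _
        rw [mul_assoc, h2, ← mul_assoc, mul_assoc (A ^ n) δ, (hδ k).eq, ← mul_assoc, ← h1]
        simp only [mul_assoc]
      have hconj' : ∀ (n : ℕ) (δ : Module.End F V), (∀ h : H, Commute δ (σ h)) →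
          ∀ h : H, Commute (B ^ n * δ * A ^ n) (σ h) := by
        intro n δ hδ h
        let k : H := ⟨a ^ n * h * (a ^ n)⁻¹, hN.conj_mem h h.2 _⟩
        have h1 := hAn n h k rfl
        have h2 : B ^ n * σ k = σ h * B ^ n := by
          calc B ^ n * σ k = B ^ n * (σ k * A ^ n) * B ^ n := by
                simp only [mul_assoc]; rw [hABn, mul_one]
            _ = (B ^ n * A ^ n) * σ h * B ^ n := by rw [h1]; simp only [mul_assoc]
            _ = _ := by rw [hBAn, one_mul]
        show _ * _ = _ * _
        rw [mul_assoc, ← h1, ← mul_assoc, mul_assoc (B ^ n) δ, (hδ k).eq, ← mul_assoc, h2]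
        simp only [mul_assoc]
      set y : Module.End F V := A ^ (j : ℕ) * z * B ^ (j : ℕ) with hy
      have hyσ : ∀ h : H, Commute y (σ h) := hconj _ z hz1
      have hyc : ∀ δ : Module.End F V, (∀ h : H, Commute δ (σ h)) → Commute y δ := by
        intro δ hδ
        have h1 := (hz2 _ (hconj' j δ hδ)).eq
        show _ * _ = _ * _
        calc A ^ (j : ℕ) * z * B ^ (j : ℕ) * δ
            = A ^ (j : ℕ) * (z * (B ^ (j : ℕ) * δ * A ^ (j : ℕ))) * B ^ (j : ℕ) := by
              simp only [mul_assoc]; rw [hABn, mul_one]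
          _ = (A ^ (j : ℕ) * B ^ (j : ℕ)) * δ * (A ^ (j : ℕ) * z * B ^ (j : ℕ)) := by
              rw [h1]; simp only [mul_assoc]
          _ = _ := by rw [hABn, one_mul]
      obtain ⟨ψ, hψG, hψι⟩ := huniv (ι ∘ₗ z) (fun h v => by
        simp only [LinearMap.comp_apply]
        rw [hequiv']
        exact congrArg ι (LinearMap.congr_fun (hz1 h).eq v))
      have hdψ : ∀ (l : Fin p) w, d l (ψ w) = (A ^ (l : ℕ) * z * B ^ (l : ℕ)) (d l w) := by
        intro l w
        have := hextV (d l ∘ₗ ψ) ((A ^ (l : ℕ) * z * B ^ (l : ℕ)) ∘ₗ d l) (fun m v => by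
          simp only [LinearMap.comp_apply]
          rw [hψG, hψι, LinearMap.comp_apply ι z v, hds, hds]
          split_ifs with hlm
          · subst hlm
            have h1 : A ^ (l : ℕ) * z = A ^ (l : ℕ) * z * B ^ (l : ℕ) * A ^ (l : ℕ) := by
              rw [mul_assoc _ (B ^ _), hBAn, mul_one]
            exact LinearMap.congr_fun h1 v
          · simp)
        exact LinearMap.congr_fun this w
      let θ' : V →ₗ[F] W := ψ ∘ₗ θ - θ ∘ₗ y
      have hdθ' : ∀ l : Fin p, d l ∘ₗ θ' = (A ^ (l : ℕ) * z * B ^ (l : ℕ) - y) * (d l ∘ₗ θ) := by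
        intro l
        ext v
        have h1 : y (d l (θ v)) = d l (θ (y v)) :=
          LinearMap.congr_fun (hyc (d l ∘ₗ θ) (fun h => LinearMap.ext fun v => hδ l h v)).eq v
        simp only [θ', LinearMap.comp_apply, LinearMap.sub_apply, map_sub, hdψ,
          Module.End.mul_apply, h1]
      have hiθ' : d i ∘ₗ θ' ≠ 0 := by
        rw [hdθ']
        have hsurj := (aux_schur (fun h : H => σ h) (fun h : H => σ h) hirr hirr (d i ∘ₗ θ)
          (fun h v => hδ i h v) hi).2
        intro h0
        apply hz3
        rw [← sub_eq_zero]
        ext v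
        obtain ⟨u, rfl⟩ := hsurj v
        exact LinearMap.congr_fun h0 u
      refine Nat.find_min hP (m := (Finset.univ.filter fun i => d i ∘ₗ θ' ≠ 0).card) ?_
        ⟨θ', ?_, ?_, ?_, rfl⟩
      · rw [← hθn]
        apply Finset.card_lt_card
        refine Finset.ssubset_iff_of_subset ?_ |>.2 ⟨j, by simpa using hj, ?_⟩
        · intro l hl
          simp only [Finset.mem_filter, Finset.mem_univ, true_and] at hl ⊢
          intro h0
          apply hl
          rw [hdθ', h0, mul_zero]
        · simp only [Finset.mem_filter, Finset.mem_univ, true_and, not_not]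
          rw [hdθ', ← hy, sub_self, zero_mul]
      · intro h0
        apply hiθ'
        rw [h0, LinearMap.comp_zero]
      · intro k v
        have h1 : y (σ k v) = σ k (y v) := LinearMap.congr_fun (hyσ k).eq v
        simp only [θ', LinearMap.sub_apply, LinearMap.comp_apply, h1, hθ, hψG, map_sub]
      · intro v
        exact T.sub_mem (hTE ψ hψG _ (hθT _)) (hθT _)
    -- now `θ` has a single component
    have hsurj := (aux_schur (fun h : H => σ h) (fun h : H => σ h) hirr hirr (d j ∘ₗ θ)
          (fun h v => hδ j h v) hj).2
    have hιT : ∀ v, ι v ∈ T := by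
      intro v
      obtain ⟨u, hu⟩ := hsurj ((A ^ (j : ℕ)) v)
      have h1 : θ u = τ (a ^ (j : ℕ)) (ι v) := by
        rw [← sub_eq_zero]
        apply hd0
        intro l
        rw [map_sub, hds]
        split_ifs with hl
        · rw [hl, ← hu]; simp
        · have := LinearMap.congr_fun (huniq l hl) u
          simpa using this
      have h2 := hTG (a ^ (j : ℕ))⁻¹ _ (hθT u)
      rw [h1, ← hmul, inv_mul_cancel, map_one] at h2
      exact h2
    exact hspan T fun i v => hTG _ _ (hιT v)
  -- a minimal submodule
  obtain ⟨U, hUU₀, hU0, hU, hUm⟩ := aux_min (fun g : G => τ g) U₀ hU₀ hU₀b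
  suffices hUt : U = ⊤ from eq_top_iff.2 (hUt ▸ hUU₀)
  have hUirr : ∀ X : Submodule F U, (∀ g : G, ∀ v ∈ X, (τ g).restrict (hU g) v ∈ X) →
      X = ⊥ ∨ X = ⊤ := by
    intro X hX
    rcases hUm (X.map U.subtype) (Submodule.map_subtype_le _ _) (by
      rintro k _ ⟨x, hx, rfl⟩
      exact ⟨_, hX k x hx, rfl⟩) with h | h
    · left
      rw [eq_bot_iff]
      intro x hx
      have : (x : W) ∈ X.map U.subtype := ⟨x, hx, rfl⟩
      rw [h, Submodule.mem_bot] at this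
      exact Subtype.ext this
    · right
      rw [eq_top_iff]
      intro x _
      have : (x : W) ∈ X.map U.subtype := by rw [h]; exact x.2
      obtain ⟨y, hy, hyx⟩ := this
      rwa [← Subtype.ext hyx]
  -- dim W is a multiple of dim U
  obtain ⟨n, hn⟩ : ∃ n, Module.finrank F W = n * Module.finrank F U := by
    let S : Set (U →ₗ[F] W) := {f | ∀ g v, f ((τ g).restrict (hU g) v) = τ g (f v)}
    have hTtop : sSup (LinearMap.range '' S) = ⊤ := by
      apply hT
      · intro h0
        apply hU0
        rw [eq_bot_iff, ← h0]
        apply le_sSup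
        exact ⟨U.subtype, fun g v => rfl, by simp⟩
      · intro g w hw
        have : sSup (LinearMap.range '' S) ≤ (sSup (LinearMap.range '' S)).comap (τ g) := by
          apply sSup_le
          rintro _ ⟨f, hf, rfl⟩ _ ⟨v, rfl⟩
          rw [Submodule.mem_comap, ← hf g v]
          exact (le_sSup (Set.mem_image_of_mem _ hf) : LinearMap.range f ≤ _) ⟨_, rfl⟩
        exact this hw
      · intro ψ hψ w hw
        have : sSup (LinearMap.range '' S) ≤ (sSup (LinearMap.range '' S)).comap ψ := by
          apply sSup_le
          rintro _ ⟨f, hf, rfl⟩ _ ⟨v, rfl⟩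
          rw [Submodule.mem_comap]
          have hf' : ψ ∘ₗ f ∈ S := fun g v => by
            simp only [LinearMap.comp_apply]
            rw [hf g v, hψ]
          exact (le_sSup (Set.mem_image_of_mem _ hf') : LinearMap.range (ψ ∘ₗ f) ≤ _) ⟨v, rfl⟩
        exact this hw
    obtain ⟨t, ht, hts⟩ := CompleteLattice.WellFoundedGT.isSupFiniteCompact (Submodule F W)
      (LinearMap.range '' S)
    obtain ⟨s, hsS, rfl⟩ := Finset.subset_set_image_iff.1 ht
    obtain ⟨n, hn⟩ := aux_dim (fun g => (τ g).restrict (hU g)) (fun g : G => τ g) hUirr s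
      (fun f hf => hsS hf) ⊥ (by simp)
    refine ⟨n, ?_⟩
    rw [Finset.sup_image, Function.id_comp] at hts
    rw [← hts, hTtop, bot_sup_eq, finrank_top, finrank_bot, zero_add] at hn
    exact hn
  -- dim U is a multiple of dim V
  obtain ⟨k, hk⟩ : ∃ k, Module.finrank F W = Module.finrank F U + k * Module.finrank F V := by
    let φ : Fin p → V →ₗ[F] W := fun i => (τ (a ^ (i : ℕ)) ∘ₗ ι) ∘ₗ (B ^ (i : ℕ))
    have hdφ : ∀ i j v, d j (φ i v) = if j = i then v else 0 := by
      intro i j v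
      simp only [φ, LinearMap.comp_apply, hds]
      split_ifs
      · exact LinearMap.congr_fun (hABn i) v
      · rfl
    obtain ⟨k, hk⟩ := aux_dim (fun h : H => σ h) (fun h : H => τ h) hirr (Finset.univ.image φ)
      (by
        intro f hf h v
        obtain ⟨i, _, rfl⟩ := Finset.mem_image.1 hf
        rw [← sub_eq_zero]
        apply hd0
        intro j
        rw [map_sub, hd, hdφ, hdφ]
        split_ifs <;> simp) U (fun h => hU h)
    have htop : U ⊔ (Finset.univ.image φ).sup LinearMap.range = ⊤ := by
      apply hspan
      intro i v
      apply Submodule.mem_sup_right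
      have h1 : LinearMap.range (φ i) ≤ (Finset.univ.image φ).sup LinearMap.range :=
        Finset.le_sup (Finset.mem_image_of_mem φ (Finset.mem_univ i))
      apply h1
      refine ⟨(A ^ (i : ℕ)) v, ?_⟩
      have h2 : (B ^ (i : ℕ)) ((A ^ (i : ℕ)) v) = v := LinearMap.congr_fun (hBAn i) v
      simp only [φ, LinearMap.comp_apply, h2]
    rw [htop, finrank_top] at hk
    exact ⟨k, hk⟩
  have hdpos : 0 < Module.finrank F V := Module.finrank_pos
  have hm : Module.finrank F U = (p - k) * Module.finrank F V := by
    rw [Nat.sub_mul, ← hdimW, hk]; omega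
  have hdvd : p = n * (p - k) := by
    apply Nat.eq_of_mul_eq_mul_right hdpos
    rw [← hdimW, hn, hm, mul_assoc]
  rcases (Nat.dvd_prime hp).1 (Dvd.intro_left n hdvd.symm) with h1 | h1
  swap
  · apply Submodule.eq_top_of_finrank_eq
    rw [hm, h1, hdimW]
  exfalso
  rw [h1, one_mul] at hm
  obtain ⟨θ, hθi, hθ, hθU⟩ := hcopy U (fun h => hU h) hU0
  have hrange : LinearMap.range θ = U := by
    apply Submodule.eq_of_le_of_finrank_eq
    · rintro _ ⟨v, rfl⟩; exact hθU v
    · rw [LinearMap.finrank_range_of_inj hθi, hm]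
  let e : V ≃ₗ[F] LinearMap.range θ := LinearEquiv.ofInjective θ hθi
  have hex : ∀ g, ∃ C : Module.End F V, ∀ v, θ (C v) = τ g (θ v) := by
    intro g
    refine ⟨e.symm.toLinearMap ∘ₗ (τ g ∘ₗ θ).codRestrict (LinearMap.range θ) (fun v => by
      rw [hrange]; exact hU g _ (hθU v)), fun v => ?_⟩
    have : ∀ x, θ (e.symm x) = x := fun x => congrArg Subtype.val (e.apply_symm_apply x)
    simp [this]
  obtain ⟨C, hC⟩ := hex a
  obtain ⟨D, hD⟩ := hex a⁻¹
  have hCD : C * D = 1 := by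
    ext v
    apply hθi
    rw [Module.End.mul_apply, hC, hD, ← hmul, mul_inv_cancel, map_one]; rfl
  have hDC : D * C = 1 := by
    ext v
    apply hθi
    rw [Module.End.mul_apply, hD, hC, ← hmul, inv_mul_cancel, map_one]; rfl
  have hCp : ∀ n v, θ ((C ^ n) v) = τ (a ^ n) (θ v) := by
    intro n
    induction n with
    | zero => simp
    | succ n ih =>
      intro v
      rw [pow_succ', Module.End.mul_apply, hC, ih, ← hmul, pow_succ']
  apply hno
  refine ⟨D * A, ?_, ?_, ?_⟩
  · exact ⟨⟨D * A, B * C, by rw [mul_assoc, ← mul_assoc A, hAB, one_mul, hDC],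
      by rw [mul_assoc, ← mul_assoc C, hCD, one_mul, hBA]⟩, rfl⟩
  · intro h
    let k : H := ⟨a * h * a⁻¹, hN.conj_mem h h.2 _⟩
    have h1 : σ k * A = A * σ h := hα h
    have h2 : D * σ k = σ h * D := by
      ext v
      apply hθi
      simp only [Module.End.mul_apply]
      rw [hD, hθ, hθ, hD, ← hmul, ← hmul]
      congr 2
      simp only [k]; group
    show _ * _ = _ * _
    rw [mul_assoc, ← h1, ← mul_assoc, h2, mul_assoc]
  · have hσ : σ ⟨a ^ p, hap⟩ = C ^ p := by
      ext v
      apply hθi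
      rw [hθ, hCp]
    rw [aux_ltp]
    show (D * A * B) ^ p * A ^ p * (B ^ p * _) = 1
    rw [hσ, mul_assoc D, hAB, mul_one, mul_assoc, ← mul_assoc (A ^ p), hABn, one_mul,
      ← Commute.mul_pow (hDC.trans hCD.symm), hDC, one_pow]
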